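/- Let d ≥ 2 be an integer, n a prime, X = (ℤ/nℤ)^d, η = e^{2π√−1/n}, and let w_0, …, w_d be nonnegative reals with Σ w_i = 1; define κ_j = (n−1)^j C(d,j), ρ_i = Σ_{j=0}^d (w_j/κ_j) K_j(i), and the coin matrix C_{y,y'} = 2√((w_{|y|}/κ_{|y|})(w_{|y'|}/κ_{|y'|})) − δ_{y,y'}. Let ψ̃_{y,ξ}(t), for y, ξ ∈ X and t ∈ ℕ, satisfy the decoupled system ψ̃_{y,ξ}(t+1) = η^{−ξ·y} Σ_{y'∈X} C_{y,y'} ψ̃_{y',ξ}(t) with initial condition ψ̃_{y,ξ}(0) = n^{−d/2}·√(w_{|y|}/κ_{|y|}). Fix ξ ∈ X \ {0} and assume −1/(n−1) < ρ_{|ξ|} < 1. Let μ^{(1)}, …, μ^{(n)} be the complex zeros (with multiplicity) of the polynomial (−z)^n + 2ρ_{|ξ|}·Σ_{i=1}^{n−1}(−z)^i + 1, and assume they are pairwise distinct. Then for all t ≥ 0 and all y ∈ X, ψ̃_{y,ξ}(t) = [ (−η^{−(ξ·y)})^t · (1 − Σ_{i=1}^n 2c^{(i)}/(1 + η^{ξ·y}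 μ^{(i)})) + Σ_{i=1}^n 2c^{(i)} (μ^{(i)})^t/(1 + η^{ξ·y} μ^{(i)}) ] · ψ̃_{y,ξ}(0), where c^{(i)} = [ (μ^{(i)})^n + (1−ρ_{|ξ|})(μ^{(i)})^{n−1} − ρ_{|ξ|}(−1)^n ] / [ n(μ^{(i)})^n + (n − 2ρ_{|ξ|}(n−1))(μ^{(i)})^{n−1} − 2ρ_{|ξ|}(−1)^n Σ_{k=0}^{n−2} (−μ^{(i)})^k ]. Moreover, ψ̃_{y,0}(t) = ψ̃_{y,0}(0) for all t ≥ 0. -/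

import Mathlib

/-- The Krawtchouk polynomial value
`K_i(j) = Σ_{l=0}^{i} (-1)^l (n-1)^{i-l} C(j,l) C(d-j, i-l)`. -/
noncomputable def kraw (n d i j : ℕ) : ℝ :=
  ∑ l ∈ Finset.range (i + 1),
    (-1 : ℝ) ^ l * ((n - 1 : ℕ) : ℝ) ^ (i - l) * (j.choose l) * ((d - j).choose (i - l))

/-- `κ_j = (n-1)^j C(d,j)`. -/
noncomputable def kap (n d j : ℕ) : ℝ := ((n - 1 : ℕ) : ℝ) ^ j * (d.choose j)

/-- The coin matrix `C_{y,y'} = 2√((w_{|y|}/κ_{|y|})(w_{|y'|}/κ_{|y'|})) - δ_{y,y'}`. -/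
noncomputable def coin (n d : ℕ) (w : ℕ → ℝ) (y y' : Fin d → ZMod n) : ℝ :=
  2 * Real.sqrt ((w (hammingNorm y) / kap n d (hammingNorm y)) *
      (w (hammingNorm y') / kap n d (hammingNorm y'))) - if y = y' then 1 else 0

/-- The coefficient `c^{(i)}` of Proposition 5.4 / Theorem 5.1:
`c = (μ^n + (1-ρ)μ^{n-1} - ρ(-1)^n) /
  (nμ^n + (n - 2ρ(n-1))μ^{n-1} - 2ρ(-1)^n Σ_{k=0}^{n-2}(-μ)^k)`. -/
noncomputable def cCoef (n : ℕ) (ρ : ℝ) (μ : ℂ) : ℂ :=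
  (μ ^ n + (1 - (ρ : ℂ)) * μ ^ (n - 1) - (ρ : ℂ) * (-1 : ℂ) ^ n) /
    ((n : ℂ) * μ ^ n + ((n : ℂ) - 2 * (ρ : ℂ) * ((n : ℂ) - 1)) * μ ^ (n - 1) -
      2 * (ρ : ℂ) * (-1 : ℂ) ^ n * ∑ k ∈ Finset.range (n - 1), (-μ) ^ k)

lemma aux_map_sum {n : ℕ} [NeZero n] {ι : Type*} (s : Finset ι) (f : ι → ZMod n) :
    (ZMod.stdAddChar (∑ i ∈ s, f i) : ℂ) = ∏ i ∈ s, ZMod.stdAddChar (f i) := by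
  classical
  induction s using Finset.induction_on with
  | empty => simp
  | insert a s ha ih => rw [Finset.sum_insert ha, Finset.prod_insert ha,
      AddChar.map_add_eq_mul, ih]

open Polynomial in
lemma aux_coeff (a : ℂ) (m k : ℕ) :
    ((1 + C a * X : ℂ[X]) ^ m).coeff k = a ^ k * (m.choose k) := by
  have h : (1 + C a * X : ℂ[X]) ^ m = ((1 + X : ℂ[X]) ^ m).comp (C a * X) := by simp
  rw [h, comp_C_mul_X_coeff, coeff_one_add_X_pow, mul_comm]

open Polynomial in
lemma aux_site (n : ℕ) [NeZero n] (hn : n.Prime) (b : ZMod n) :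
    (∑ x : ZMod n, C (ZMod.stdAddChar (b * x)) * (if x ≠ 0 then X else 1) : ℂ[X]) =
      if b ≠ 0 then 1 + C (-1) * X else 1 + C (((n - 1 : ℕ) : ℂ)) * X := by
  have h1 : ∀ x : ZMod n, (C (ZMod.stdAddChar (b * x)) * (if x ≠ 0 then X else 1) : ℂ[X]) =
      C (ZMod.stdAddChar (b * x)) * X + if x = 0 then 1 - X else 0 := by
    intro x
    by_cases hx : x = 0
    · simp [hx]
    · simp [hx]
  rw [Finset.sum_congr rfl fun x _ => h1 x, Finset.sum_add_distrib, ← Finset.sum_mul,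
    ← map_sum]
  have h2 := AddChar.sum_mulShift b (ZMod.isPrimitive_stdAddChar n)
  simp_rw [mul_comm _ b] at h2
  rw [h2]
  by_cases hb : b = 0
  · have : ((n - 1 : ℕ) : ℂ) = n - 1 := by
      rw [Nat.cast_sub hn.one_lt.le]; simp
    simp [hb, this]
    ring
  · simp [hb]
    ring

open Polynomial in
lemma aux_kraw (n d : ℕ) [NeZero n] (hn : n.Prime) (ξ : Fin d → ZMod n) (j : ℕ) :
    ∑ y : Fin d → ZMod n with hammingNorm y = j,
      (ZMod.stdAddChar (∑ i, ξ i * y i) : ℂ) = (kraw n d j (hammingNorm ξ) : ℂ) := by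
  have key : ∑ y : Fin d → ZMod n,
      (C (ZMod.stdAddChar (∑ i, ξ i * y i)) * X ^ hammingNorm y : ℂ[X]) =
      (1 + C (-1) * X) ^ hammingNorm ξ *
        (1 + C (((n - 1 : ℕ) : ℂ)) * X) ^ (d - hammingNorm ξ) := by
    have h1 : ∀ y : Fin d → ZMod n,
        (C (ZMod.stdAddChar (∑ i, ξ i * y i)) * X ^ hammingNorm y : ℂ[X]) =
        ∏ i, (C (ZMod.stdAddChar (ξ i * y i)) * (if y i ≠ 0 then X else 1)) := by
      intro y
      rw [Finset.prod_mul_distrib, aux_map_sum, map_prod, Finset.prod_ite]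
      simp [hammingNorm]
    rw [Finset.sum_congr rfl fun y _ => h1 y]
    rw [← Fintype.prod_sum (fun i (x : ZMod n) =>
      (C (ZMod.stdAddChar (ξ i * x)) * (if x ≠ 0 then X else 1) : ℂ[X]))]
    rw [Finset.prod_congr rfl fun i _ => aux_site n hn (ξ i), Finset.prod_ite]
    have h3 : (Finset.univ.filter fun i => ¬ (ξ i ≠ 0)).card = d - hammingNorm ξ := by
      have := Finset.card_filter_add_card_filter_not (s := (Finset.univ : Finset (Fin d)))
        (fun i => ξ i ≠ 0)
      simp only [Finset.card_univ, Fintype.card_fin] at this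
      unfold hammingNorm
      omega
    rw [Finset.prod_const, Finset.prod_const, h3]
    rfl
  have hc := congrArg (fun p => Polynomial.coeff p j) key
  simp only [finsetSum_coeff, coeff_C_mul, coeff_X_pow] at hc
  simp only [coeff_mul, aux_coeff] at hc
  rw [Finset.sum_filter]
  have h4 : ∀ y : Fin d → ZMod n,
      (if hammingNorm y = j then (ZMod.stdAddChar (∑ i, ξ i * y i) : ℂ) else 0) =
      ZMod.stdAddChar (∑ i, ξ i * y i) * if j = hammingNorm y then 1 else 0 := by
    intro y
    by_cases h : hammingNorm y = j
    · simp [h]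
    · simp [h, Ne.symm h]
  rw [Finset.sum_congr rfl fun y _ => h4 y, hc, Finset.Nat.sum_antidiagonal_eq_sum_range_succ_mk]
  simp only [kraw]
  push_cast
  exact Finset.sum_congr rfl fun l _ => by ring

lemma aux_kraw_zero (n d j : ℕ) : kraw n d j 0 = kap n d j := by
  unfold kraw kap
  rw [Finset.sum_eq_single 0]
  · simp
  · intro b _ hb
    simp [Nat.choose_eq_zero_of_lt (Nat.pos_of_ne_zero hb)]
  · simp

lemma aux_hn {n d : ℕ} (y : Fin d → ZMod n) : hammingNorm y < d + 1 := by
  have := hammingNorm_le_card_fintype (x := y)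
  simp at this
  omega

lemma aux_G (n d : ℕ) [NeZero n] (hn : n.Prime) (w : ℕ → ℝ) (ξ : Fin d → ZMod n) :
    ∑ y : Fin d → ZMod n, ((w (hammingNorm y) / kap n d (hammingNorm y) : ℝ) : ℂ) *
      ZMod.stdAddChar (∑ i, ξ i * y i) =
    ((∑ j ∈ Finset.range (d + 1), w j / kap n d j * kraw n d j (hammingNorm ξ) : ℝ) : ℂ) := by
  rw [← Finset.sum_fiberwise_of_maps_to (s := Finset.univ) (t := Finset.range (d + 1))
    (g := fun y : Fin d → ZMod n => hammingNorm y)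
    (fun y _ => Finset.mem_range.2 (aux_hn y))]
  rw [Complex.ofReal_sum]
  refine Finset.sum_congr rfl fun j _ => ?_
  rw [Complex.ofReal_mul, ← aux_kraw n d hn, Finset.mul_sum]
  refine Finset.sum_congr rfl fun y hy => ?_
  rw [(Finset.mem_filter.1 hy).2]

lemma aux_kap_pos (n d j : ℕ) (hn : n.Prime) (hj : j < d + 1) : 0 < kap n d j := by
  have h1 : 0 < n - 1 := Nat.sub_pos_of_lt hn.one_lt
  have h2 : 0 < d.choose j := Nat.choose_pos (by omega)
  unfold kap
  positivity

lemma aux_G_zero (n d : ℕ) [NeZero n] (hn : n.Prime) (w : ℕ → ℝ)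
    (hsum : ∑ i ∈ Finset.range (d + 1), w i = 1) :
    ∑ y : Fin d → ZMod n, ((w (hammingNorm y) / kap n d (hammingNorm y) : ℝ) : ℂ) = 1 := by
  have h := aux_G n d hn w 0
  simp only [Pi.zero_apply, zero_mul, Finset.sum_const_zero, AddChar.map_zero_eq_one,
    mul_one, hammingNorm_zero, aux_kraw_zero] at h
  rw [h, ← Complex.ofReal_one, ← hsum]
  congr 1
  refine Finset.sum_congr rfl fun j hj => ?_
  exact div_mul_cancel₀ _ (aux_kap_pos n d j hn (Finset.mem_range.1 hj)).ne'

lemma aux_geom (x : ℂ) (m : ℕ) :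
    (1 - x) * ∑ i ∈ Finset.range m, ((i : ℂ) + 1) * x ^ i =
      ∑ i ∈ Finset.range m, x ^ i - m * x ^ m := by
  induction m with
  | zero => simp
  | succ m ih =>
    rw [Finset.sum_range_succ, Finset.sum_range_succ, mul_add, ih]
    push_cast
    ring

lemma aux_Icc (n : ℕ) (x : ℂ) :
    ∑ i ∈ Finset.Icc 1 (n - 1), x ^ i = x * ∑ i ∈ Finset.range (n - 1), x ^ i := by
  have h : ∀ m : ℕ, ∑ i ∈ Finset.Icc 1 m, x ^ i = x * ∑ i ∈ Finset.range m, x ^ i := by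
    intro m
    induction m with
    | zero => simp
    | succ m ih =>
      rw [Finset.sum_Icc_succ_top (by omega), ih, Finset.sum_range_succ]
      ring
  exact h _

open Polynomial in
lemma aux_pf (m : ℕ) (r : ℝ) (μ : Fin (m + 1) → ℂ)
    (hμ : ∀ z : ℂ, (-z) ^ (m + 1) + 2 * (r : ℂ) * ((-z) * ∑ i ∈ Finset.range m, (-z) ^ i) + 1 =
        (-1 : ℂ) ^ (m + 1) * ∏ i, (z - μ i))
    (hdist : Function.Injective μ) (h1 : ∀ i, 1 + μ i ≠ 0)
    (u : ℂ) (hu : (-u) ^ (m + 1) = 1) (huμ : ∀ i, u ≠ μ i) :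
    ∑ i, 2 * cCoef (m + 1) r (μ i) * (u / (u - μ i)) = 1 := by
  classical
  set s : ℂ := (-1) ^ (m + 1) with hs
  have hss : s * s = 1 := by rw [hs, ← mul_pow]; norm_num
  set P : ℂ[X] := X ^ (m + 1) + C (2 * r * s) * ∑ i ∈ Finset.range m, (-X) ^ (i + 1) + C s with hP
  set A : ℂ[X] := X ^ m - C (r * s) * ∑ i ∈ Finset.range m, (-X) ^ i with hA
  have hneg : ∀ z : ℂ, (-z) ^ (m + 1) = s * z ^ (m + 1) := by
    intro z; rw [neg_pow]
  have hPnodal : Lagrange.nodal Finset.univ μ = P := by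
    apply Polynomial.funext
    intro z
    rw [Lagrange.eval_nodal]
    have h := hμ z
    rw [hneg] at h
    have e : ∏ i, (z - μ i) = s * (s * ∏ i, (z - μ i)) := by rw [← mul_assoc, hss, one_mul]
    rw [e, ← h]
    simp only [hP, eval_add, eval_mul, eval_C, eval_pow, eval_X, eval_finsetSum, eval_neg,
      pow_succ' (-z), ← Finset.mul_sum]
    linear_combination (z ^ (m+1)) * hss
  have hAdeg : A.degree < (Finset.univ : Finset (Fin (m + 1))).card := by
    simp only [Finset.card_univ, Fintype.card_fin]
    rw [← Polynomial.mem_degreeLT]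
    refine Submodule.sub_mem _ ?_ ?_
    · rw [mem_degreeLT, degree_X_pow]
      exact_mod_cast Nat.lt_succ_self m
    · rw [← smul_eq_C_mul]
      refine Submodule.smul_mem _ _ (Submodule.sum_mem _ fun i hi => ?_)
      rw [mem_degreeLT, neg_pow, ← C_1, ← C_neg, ← C_pow]
      refine (degree_C_mul_X_pow_le _ _).trans_lt ?_
      have := Finset.mem_range.1 hi
      exact_mod_cast (by omega : i < m + 1)
  have hc : ∀ i, cCoef (m + 1) r (μ i) =
      Lagrange.nodalWeight Finset.univ μ i * A.eval (μ i) := by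
    intro i
    rw [Lagrange.nodalWeight_eq_eval_derivative_nodal (Finset.mem_univ i), hPnodal]
    have hder : P.derivative.eval (μ i) = (m + 1) * (μ i) ^ m -
        2 * r * s * ∑ k ∈ Finset.range m, ((k : ℂ) + 1) * (- μ i) ^ k := by
      simp [hP, derivative_pow, eval_finsetSum]
      ring
    have hg := aux_geom (-μ i) m
    have hg0 := mul_neg_geom_sum (-μ i) m
    have hm : s * (-μ i) ^ m = - (μ i) ^ m := by
      rw [hs, pow_succ, neg_pow (μ i)]
      have : ((-1 : ℂ) ^ m) * (-1) ^ m = 1 := by rw [← mul_pow]; norm_num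
      linear_combination (- μ i ^ m) * this
    have hD : ((m + 1 : ℕ) : ℂ) * μ i ^ (m + 1) +
        (((m + 1 : ℕ) : ℂ) - 2 * (r : ℂ) * (((m + 1 : ℕ) : ℂ) - 1)) * μ i ^ (m + 1 - 1) -
        2 * (r : ℂ) * s * ∑ k ∈ Finset.range (m + 1 - 1), (-μ i) ^ k =
        (1 + μ i) * P.derivative.eval (μ i) := by
      rw [hder]
      simp only [Nat.add_sub_cancel]
      push_cast
      linear_combination (2 * r * s) * hg - 2 * r * m * hm
    have hN : μ i ^ (m + 1) + (1 - (r : ℂ)) * μ i ^ (m + 1 - 1) - (r : ℂ) * s =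
        (1 + μ i) * A.eval (μ i) := by
      simp only [hA, eval_sub, eval_mul, eval_C, eval_pow, eval_X, eval_finsetSum, eval_neg,
        Nat.add_sub_cancel]
      linear_combination (r * s) * hg0 - r * hm
    unfold cCoef
    rw [← hs, hD, hN, mul_div_mul_left _ _ (h1 i), div_eq_mul_inv, mul_comm]
  have hint := Lagrange.eq_interpolate (f := A) (s := Finset.univ) (v := μ)
    hdist.injOn hAdeg
  have hev := congrArg (eval u) hint
  rw [Lagrange.eval_interpolate_not_at_node _ (fun i _ => huμ i), hPnodal] at hev
  have hPu : P.eval u ≠ 0 := by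
    rw [← hPnodal, Lagrange.eval_nodal]
    exact Finset.prod_ne_zero_iff.2 fun i _ => sub_ne_zero.2 (huμ i)
  have hfin : 2 * u * A.eval u = P.eval u := by
    simp only [hP, hA, eval_sub, eval_add, eval_mul, eval_C, eval_pow, eval_X, eval_finsetSum,
      eval_neg, pow_succ' (-u), ← Finset.mul_sum]
    rw [hneg] at hu
    linear_combination s * hu - u ^ (m+1) * hss
  apply mul_left_cancel₀ hPu
  rw [mul_one]
  conv_rhs => rw [← hfin, hev]
  rw [Finset.mul_sum, Finset.mul_sum, Finset.mul_sum]
  refine Finset.sum_congr rfl fun i _ => ?_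
  rw [hc]
  ring

lemma aux_pow_val {n : ℕ} [NeZero n] (η : ℂ)
    (hη : η = Complex.exp (2 * Real.pi * Complex.I / n)) (k : ZMod n) :
    η ^ k.val = ZMod.stdAddChar k := by
  rw [ZMod.stdAddChar_apply, ZMod.toCircle_apply, hη, ← Complex.exp_nat_mul]
  congr 1
  ring

lemma aux_char_pow {n : ℕ} [NeZero n] (k : ZMod n) :
    (ZMod.stdAddChar k : ℂ) ^ n = 1 := by
  rw [← AddChar.map_nsmul_eq_pow]
  simp

lemma aux_P_ne (m : ℕ) (hm : 0 < m) (r : ℝ) (hlo : -(1 / (m : ℝ)) < r) (hhi : r < 1)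
    (x : ℂ) (hx : x ^ (m + 1) = 1) :
    x ^ (m + 1) + 2 * (r : ℂ) * (x * ∑ i ∈ Finset.range m, x ^ i) + 1 ≠ 0 := by
  by_cases h : x = 1
  · subst h
    intro h
    simp at h
    have h' : (1 + 2 * r * m + 1 : ℝ) = 0 := by exact_mod_cast h
    have hm' : (0 : ℝ) < m := by exact_mod_cast hm
    have := mul_lt_mul_of_pos_right hlo hm'
    have e : -(1 / (m : ℝ)) * m = -1 := by field_simp
    rw [e] at this
    linarith
  · have hg := mul_neg_geom_sum x (m + 1)
    rw [hx, sub_self] at hg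
    have h0 : ∑ i ∈ Finset.range (m + 1), x ^ i = 0 :=
      (mul_eq_zero.1 hg).resolve_left (sub_ne_zero.2 (Ne.symm h))
    rw [Finset.sum_range_succ'] at h0
    simp only [pow_succ', ← Finset.mul_sum, pow_zero] at h0
    intro h'
    rw [hx] at h'
    have h2 : ((2 - 2 * r : ℝ) : ℂ) = 0 := by
      push_cast
      linear_combination h' - 2 * r * h0
    have : (2 - 2 * r : ℝ) = 0 := by exact_mod_cast h2
    linarith

lemma aux_hamming_smul {n d : ℕ} (hn : n.Prime) (ξ : Fin d → ZMod n) (m : ℕ)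
    (hm0 : 0 < m) (hm : m < n) :
    hammingNorm (fun i => (m : ZMod n) * ξ i) = hammingNorm ξ := by
  have : Fact n.Prime := ⟨hn⟩
  have hne : (m : ZMod n) ≠ 0 := by
    intro h
    rw [ZMod.natCast_eq_zero_iff] at h
    exact absurd (Nat.le_of_dvd hm0 h) (by omega)
  simp [hammingNorm, hne]

lemma aux_moment (n d : ℕ) [NeZero n] (hn : n.Prime) (w : ℕ → ℝ) (ξ : Fin d → ZMod n)
    (m : ℕ) (hm0 : 0 < m) (hm : m < n) :
    ∑ y : Fin d → ZMod n, ((w (hammingNorm y) / kap n d (hammingNorm y) : ℝ) : ℂ) *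
      (ZMod.stdAddChar (∑ i, ξ i * y i)) ^ m =
    ((∑ j ∈ Finset.range (d + 1), w j / kap n d j * kraw n d j (hammingNorm ξ) : ℝ) : ℂ) := by
  rw [← aux_hamming_smul hn ξ m hm0 hm, ← aux_G n d hn]
  refine Finset.sum_congr rfl fun y _ => ?_
  rw [← AddChar.map_nsmul_eq_pow, nsmul_eq_mul, Finset.mul_sum]
  simp only [mul_assoc]

lemma aux_half (m d : ℕ) (hn : (m + 1).Prime) (w : ℕ → ℝ)
    (hsum : ∑ i ∈ Finset.range (d + 1), w i = 1) (ξ : Fin d → ZMod (m + 1)) (r : ℝ)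
    (hr : r = ∑ j ∈ Finset.range (d + 1),
      w j / kap (m + 1) d j * kraw (m + 1) d j (hammingNorm ξ))
    (x : ℂ) (hx : x ^ (m + 1) ≠ 1)
    (hP : x ^ (m + 1) + 2 * (r : ℂ) * (x * ∑ i ∈ Finset.range m, x ^ i) + 1 = 0) :
    ∑ y : Fin d → ZMod (m + 1),
      ((w (hammingNorm y) / kap (m + 1) d (hammingNorm y) : ℝ) : ℂ) /
      (1 - ZMod.stdAddChar (∑ i, ξ i * y i) * x) = 1 / 2 := by
  have hx' : 1 - x ^ (m + 1) ≠ 0 := sub_ne_zero.2 (Ne.symm hx)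
  apply mul_left_cancel₀ hx'
  rw [Finset.mul_sum]
  have h1 : ∀ y : Fin d → ZMod (m + 1), (1 - x ^ (m + 1)) *
      (((w (hammingNorm y) / kap (m + 1) d (hammingNorm y) : ℝ) : ℂ) /
      (1 - ZMod.stdAddChar (∑ i, ξ i * y i) * x)) =
      ∑ k ∈ Finset.range (m + 1),
        x ^ k * (((w (hammingNorm y) / kap (m + 1) d (hammingNorm y) : ℝ) : ℂ) *
          ZMod.stdAddChar (∑ i, ξ i * y i) ^ k) := by
    intro y
    set z : ℂ := ZMod.stdAddChar (∑ i, ξ i * y i) with hz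
    have hzn : z ^ (m + 1) = 1 := aux_char_pow _
    have hne : 1 - z * x ≠ 0 := by
      intro h
      apply hx
      have : z * x = 1 := (sub_eq_zero.1 h).symm
      have h2 : (z * x) ^ (m + 1) = 1 := by rw [this, one_pow]
      rwa [mul_pow, hzn, one_mul] at h2
    have hg := mul_neg_geom_sum (z * x) (m + 1)
    rw [mul_pow, hzn, one_mul] at hg
    rw [← hg]
    field_simp
    rw [Finset.sum_mul]
    refine Finset.sum_congr rfl fun k _ => ?_
    rw [mul_pow]
    ring
  rw [Finset.sum_congr rfl fun y _ => h1 y, Finset.sum_comm]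
  simp only [← Finset.mul_sum]
  rw [Finset.sum_range_succ']
  have h2 : ∀ k ∈ Finset.range m, x ^ (k + 1) * ∑ y : Fin d → ZMod (m + 1),
      ((w (hammingNorm y) / kap (m + 1) d (hammingNorm y) : ℝ) : ℂ) *
          ZMod.stdAddChar (∑ i, ξ i * y i) ^ (k + 1) = (r * x) * x ^ k := by
    intro k hk
    rw [aux_moment (m + 1) d hn w ξ (k + 1) (by omega)
      (by have := Finset.mem_range.1 hk; omega), ← hr]
    ring
  rw [Finset.sum_congr rfl h2]
  simp only [pow_zero, mul_one, one_mul]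
  rw [aux_G_zero (m + 1) d hn w hsum, ← Finset.mul_sum]
  linear_combination hP / 2

/-- solution of the decoupled Fourier-transformed quantum-walk system.
For fixed `ξ ≠ 0` with `-1/(n-1) < ρ_{|ξ|} < 1`, if `μ^{(1)},…,μ^{(n)}` are the (pairwise
distinct) zeros of `(-z)^n + 2ρ_{|ξ|}Σ_{i=1}^{n-1}(-z)^i + 1`, then
`ψ̃_{y,ξ}(t) = [(-η^{-ξ·y})^t (1 - Σᵢ 2c⁽ⁱ⁾/(1+η^{ξ·y}μ⁽ⁱ⁾)) + Σᵢ 2c⁽ⁱ⁾(μ⁽ⁱ⁾)^t/(1+η^{ξ·y}μ⁽ⁱ⁾)]·ψ̃_{y,ξ}(0)`,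
and moreover `ψ̃_{y,0}(t) = ψ̃_{y,0}(0)`.
(The instance `[NeZero n]` is automatic from primality of `n`.) -/
theorem fourier_wave_vector (n d : ℕ) (hn : n.Prime) [NeZero n] (hd : 2 ≤ d) (η : ℂ)
    (hη : η = Complex.exp (2 * Real.pi * Complex.I / n))
    (w : ℕ → ℝ) (hw : ∀ i ∈ Finset.range (d + 1), 0 ≤ w i)
    (hsum : ∑ i ∈ Finset.range (d + 1), w i = 1)
    (ρ : ℕ → ℝ) (hρ : ∀ i, ρ i = ∑ j ∈ Finset.range (d + 1), w j / kap n d j * kraw n d j i)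
    (ψ : ℕ → (Fin d → ZMod n) → (Fin d → ZMod n) → ℂ)
    (hψ0 : ∀ (y ξ : Fin d → ZMod n), ψ 0 y ξ =
      (((Real.sqrt ((n : ℝ) ^ d))⁻¹ *
        Real.sqrt (w (hammingNorm y) / kap n d (hammingNorm y)) : ℝ) : ℂ))
    (hψ : ∀ (t : ℕ) (y ξ : Fin d → ZMod n), ψ (t + 1) y ξ =
      (η ^ (∑ j, ξ j * y j).val)⁻¹ * ∑ y', ((coin n d w y y' : ℝ) : ℂ) * ψ t y' ξ)
    (ξ : Fin d → ZMod n) (hξ : ξ ≠ 0)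
    (hlo : -(1 / ((n : ℝ) - 1)) < ρ (hammingNorm ξ)) (hhi : ρ (hammingNorm ξ) < 1)
    (μ : Fin n → ℂ)
    (hμ : ∀ z : ℂ,
      (-z) ^ n + 2 * (ρ (hammingNorm ξ) : ℂ) * (∑ i ∈ Finset.Icc 1 (n - 1), (-z) ^ i) + 1 =
        (-1 : ℂ) ^ n * ∏ i, (z - μ i))
    (hdist : Function.Injective μ) :
    (∀ (t : ℕ) (y : Fin d → ZMod n), ψ t y ξ =
      ((-(η ^ (∑ j, ξ j * y j).val)⁻¹) ^ t *
          (1 - ∑ i, 2 * cCoef n (ρ (hammingNorm ξ)) (μ i) /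
            (1 + η ^ (∑ j, ξ j * y j).val * μ i)) +
        ∑ i, 2 * cCoef n (ρ (hammingNorm ξ)) (μ i) * μ i ^ t /
          (1 + η ^ (∑ j, ξ j * y j).val * μ i)) * ψ 0 y ξ) ∧
    (∀ (t : ℕ) (y : Fin d → ZMod n), ψ t y 0 = ψ 0 y 0) := by
  have hn2 := hn.two_le
  obtain ⟨m, rfl⟩ : ∃ m, n = m + 1 := ⟨n - 1, by omega⟩
  have hm : 0 < m := by omega
  set r := ρ (hammingNorm ξ) with hrdef
  have hr := hρ (hammingNorm ξ)
  rw [← hrdef] at hr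
  have hlo' : -(1 / (m : ℝ)) < r := by simpa using hlo
  have hμ' : ∀ z : ℂ,
      (-z) ^ (m + 1) + 2 * (r : ℂ) * ((-z) * ∑ i ∈ Finset.range m, (-z) ^ i) + 1 =
        (-1 : ℂ) ^ (m + 1) * ∏ i, (z - μ i) := by
    intro z
    rw [← hμ z, aux_Icc]
    rfl
  have hroot : ∀ i, (-μ i) ^ (m + 1) +
      2 * (r : ℂ) * ((-μ i) * ∑ k ∈ Finset.range m, (-μ i) ^ k) + 1 = 0 := by
    intro i
    rw [hμ', Finset.prod_eq_zero (Finset.mem_univ i) (sub_self _), mul_zero]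
  have hpow : ∀ i, (-μ i) ^ (m + 1) ≠ 1 := fun i h =>
    aux_P_ne m hm r hlo' hhi _ h (hroot i)
  simp only [aux_pow_val η hη] at hψ ⊢
  set a : (Fin d → ZMod (m + 1)) → ℝ :=
    fun y => w (hammingNorm y) / kap (m + 1) d (hammingNorm y) with ha
  have ha0 : ∀ y, 0 ≤ a y := fun y =>
    div_nonneg (hw _ (Finset.mem_range.2 (aux_hn y))) (aux_kap_pos _ _ _ hn (aux_hn y)).le
  have hsq : ∀ y, ((Real.sqrt (a y) : ℝ) : ℂ) * ((Real.sqrt (a y) : ℝ) : ℂ) = (a y : ℂ) := by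
    intro y
    rw [← Complex.ofReal_mul, Real.mul_self_sqrt (ha0 y)]
  set N : ℂ := (((Real.sqrt (((m + 1 : ℕ) : ℝ) ^ d))⁻¹ : ℝ) : ℂ) with hN
  have hψ0' : ∀ y ξ, ψ 0 y ξ = N * ((Real.sqrt (a y) : ℝ) : ℂ) := by
    intro y ξ
    rw [hψ0, hN, ← Complex.ofReal_mul]
  have hstep : ∀ (t : ℕ) (y ξ : Fin d → ZMod (m + 1)), ψ (t + 1) y ξ =
      (ZMod.stdAddChar (∑ j, ξ j * y j))⁻¹ *
        (2 * ((Real.sqrt (a y) : ℝ) : ℂ) * ∑ y', ((Real.sqrt (a y') : ℝ) : ℂ) * ψ t y' ξ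
          - ψ t y ξ) := by
    intro t y ξ
    rw [hψ]
    congr 1
    have h : ∀ y', ((coin (m + 1) d w y y' : ℝ) : ℂ) * ψ t y' ξ =
        2 * ((Real.sqrt (a y) : ℝ) : ℂ) * (((Real.sqrt (a y') : ℝ) : ℂ) * ψ t y' ξ) -
        if y = y' then ψ t y' ξ else 0 := by
      intro y'
      have : coin (m + 1) d w y y' = 2 * (Real.sqrt (a y) * Real.sqrt (a y')) -
          if y = y' then 1 else 0 := by
        rw [← Real.sqrt_mul (ha0 y)]
        rfl
      rw [this]
      split_ifs <;> push_cast <;> ring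
    rw [Finset.sum_congr rfl fun y' _ => h y', Finset.sum_sub_distrib, ← Finset.mul_sum]
    simp
  have hone : ∑ y, (a y : ℂ) = 1 := aux_G_zero (m + 1) d hn w hsum
  have hzn : ∀ y : Fin d → ZMod (m + 1),
      (ZMod.stdAddChar (∑ j, ξ j * y j) : ℂ) ^ (m + 1) = 1 := fun y => aux_char_pow _
  have hz0 : ∀ y : Fin d → ZMod (m + 1),
      (ZMod.stdAddChar (∑ j, ξ j * y j) : ℂ) ≠ 0 := by
    intro y h
    have := hzn y
    rw [h] at this
    simp at this
  have hden : ∀ (y : Fin d → ZMod (m + 1)) i,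
      1 + (ZMod.stdAddChar (∑ j, ξ j * y j) : ℂ) * μ i ≠ 0 := by
    intro y i h
    apply hpow i
    have h2 : (ZMod.stdAddChar (∑ j, ξ j * y j) : ℂ) * (-μ i) = 1 := by linear_combination -h
    have h3 := congrArg (· ^ (m + 1)) h2
    simpa only [mul_pow, hzn, one_mul, one_pow] using h3
  have hhalf : ∀ i, ∑ y : Fin d → ZMod (m + 1), (a y : ℂ) /
      (1 + ZMod.stdAddChar (∑ j, ξ j * y j) * μ i) = 1 / 2 := by
    intro i
    rw [← aux_half m d hn w hsum ξ r hr (-μ i) (hpow i) (hroot i)]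
    refine Finset.sum_congr rfl fun y _ => ?_
    rw [mul_neg, sub_neg_eq_add]
  have hpf : ∀ y : Fin d → ZMod (m + 1), ∑ i, 2 * cCoef (m + 1) r (μ i) /
      (1 + ZMod.stdAddChar (∑ j, ξ j * y j) * μ i) = 1 := by
    intro y
    set z : ℂ := ZMod.stdAddChar (∑ j, ξ j * y j) with hz
    have h1 : ∀ i, 1 + μ i ≠ 0 := by
      intro i h
      apply hpow i
      have : -μ i = 1 := by linear_combination -h
      rw [this, one_pow]
    have hu : ∀ i, -z⁻¹ ≠ μ i := by
      intro i h
      apply hden y i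
      rw [← hz, ← h]
      rw [mul_neg, mul_inv_cancel₀ (hz0 y)]
      ring
    refine Eq.trans ?_
      (aux_pf m r μ hμ' hdist h1 (-z⁻¹) (by rw [neg_neg, inv_pow, hzn y, inv_one]) hu)
    refine Finset.sum_congr rfl fun i _ => ?_
    have e : -z⁻¹ / (-z⁻¹ - μ i) = 1 / (1 + z * μ i) := by
      have h4 := sub_ne_zero.2 (hu i)
      have h5 := hden y i
      rw [← hz] at h5
      rw [div_eq_div_iff h4 h5]
      have h6 : z⁻¹ * z = 1 := inv_mul_cancel₀ (hz0 y)
      linear_combination (-μ i) * h6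
    rw [e]
    ring
  constructor
  · intro t
    induction t with
    | zero =>
      intro y
      simp [hpf y]
    | succ t ih =>
      intro y
      have hS : ∑ y', ((Real.sqrt (a y') : ℝ) : ℂ) * ψ t y' ξ =
          N * ∑ i, cCoef (m + 1) r (μ i) * μ i ^ t := by
        have h : ∀ y', ((Real.sqrt (a y') : ℝ) : ℂ) * ψ t y' ξ =
            ∑ i, (2 * N * cCoef (m + 1) r (μ i) * μ i ^ t) *
              ((a y' : ℂ) / (1 + ZMod.stdAddChar (∑ j, ξ j * y' j) * μ i)) := by
          intro y'
          rw [ih y', hpf y', hψ0', sub_self, mul_zero, zero_add, Finset.sum_mul,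
            Finset.mul_sum]
          refine Finset.sum_congr rfl fun i _ => ?_
          rw [← hsq y']
          ring
        rw [Finset.sum_congr rfl fun y' _ => h y', Finset.sum_comm, Finset.mul_sum]
        refine Finset.sum_congr rfl fun i _ => ?_
        rw [← Finset.mul_sum, hhalf]
        ring
      rw [hstep, hS, ih y, hpf y, sub_self, mul_zero, mul_zero, zero_add, zero_add, hψ0']
      have e : ∀ i, 2 * cCoef (m + 1) r (μ i) * μ i ^ (t + 1) /
          (1 + ZMod.stdAddChar (∑ j, ξ j * y j) * μ i) =
          (ZMod.stdAddChar (∑ j, ξ j * y j))⁻¹ * (2 * (cCoef (m + 1) r (μ i) * μ i ^ t) -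
            2 * cCoef (m + 1) r (μ i) * μ i ^ t /
              (1 + ZMod.stdAddChar (∑ j, ξ j * y j) * μ i)) := by
        intro i
        have h5 := hden y i
        have h6 := hz0 y
        field_simp
        ring
      rw [Finset.sum_congr rfl fun i _ => e i, ← Finset.mul_sum, Finset.sum_sub_distrib,
        ← Finset.mul_sum]
      ring
  · intro t
    induction t with
    | zero => intro y; rfl
    | succ t ih =>
      intro y
      have hS : ∑ y', ((Real.sqrt (a y') : ℝ) : ℂ) * ψ t y' 0 = N := by
        have h : ∀ y', ((Real.sqrt (a y') : ℝ) : ℂ) * ψ t y' 0 = N * (a y' : ℂ) := by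
          intro y'
          rw [ih y', hψ0', ← hsq y']
          ring
        rw [Finset.sum_congr rfl fun y' _ => h y', ← Finset.mul_sum, hone, mul_one]
      rw [hstep, hS, ih y, hψ0']
      simp
      ring
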